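/- arXiv:0907.3254 — 3 statements merged into one kernel-verified Lean document; each statement's English description precedes it below -/
import Mathlib

section
/- Let n ≥ 1 and 1 ≤ k ≤ n. For each j with 0 ≤ j ≤ k−1, the number of paths p in 𝒫(n,1,1) with p_1 = −1 and p_{2n+1} = +1 that have exactly k−1 peaks, of which exactly j lie on or below the x-axis, equals (1/k)·C(n,k−1)·C(n−1,k−1). -/
open Finset

/-- The sum of the first `m` entries of a sequence `p` of length `N` (the height `s_m`). -/
def psum {N : ℕ} (p : Fin N → ℤ) (m : ℕ) : ℤ :=
  ∑ j ∈ Finset.univ.filter (fun j : Fin N => (j : ℕ) < m), p j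

/-!
Call a cyclic rotation of a word with `n + 1` up steps and `n` down steps *rooted* if it starts
with the down step of a cyclic peak. A rooted word starts with a down step and ends with an up step;
apart from the cyclic peak at its root, its cyclic peaks are its ordinary peaks, so `k` cyclic peaks
mean `k - 1` peaks.

Tilt the heights by subtracting the line of slope `1 / (2 * n + 1)`. Since the total displacement is
`1`, the tilted heights are periodic, they are pairwise distinct within a period, and a point is on
or below the axis after rerooting at `r` exactly when its tilted height is less than that of `r`.
Hence the number of peaks on or below the axis after rerooting at `r` is the rank of `r` among the
`k` cyclic peaks, and each rank `0, …, k - 1` occurs exactly once. Double counting over all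
rotations, each value of `j` accounts for a fraction `1 / k` of the rooted words.

Deleting the final up step of a rooted word changes no peak. What remains is a down step followed by
an arbitrary word, and the number of such words with `k - 1` peaks satisfies a first-step recursion,
coupled with that for words starting with an up step, whose solution is a product of two binomial
coefficients.
-/

theorem card_filter_lt_lt_card_filter_lt {α β : Type*} [Preorder β] [DecidableLT β] (T : Finset α)
    (f : α → β) {a b : α} (ha : a ∈ T) (hab : f a < f b) :
    #{t ∈ T | f t < f a} < #{t ∈ T | f t < f b} := by
  refine card_lt_card ((ssubset_iff_of_subset fun t ht ↦ ?_).2 ⟨a, by simp [ha, hab], by simp⟩)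
  rw [mem_filter] at ht ⊢
  exact ⟨ht.1, ht.2.trans hab⟩

theorem existsUnique_card_filter_lt_eq {α β : Type*} [LinearOrder β] {T : Finset α} {f : α → β}
    (hf : Set.InjOn f T) {j : ℕ} (hj : j < #T) : ∃! r, r ∈ T ∧ #{t ∈ T | f t < f r} = j := by
  have hinj : Set.InjOn (fun r ↦ #{t ∈ T | f t < f r}) T := by
    intro a ha b hb hab
    refine hf ha hb (le_antisymm ?_ ?_) <;> by_contra! h
    · exact (card_filter_lt_lt_card_filter_lt T f hb h).ne' hab
    · exact (card_filter_lt_lt_card_filter_lt T f ha h).ne hab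
  have hmaps : Set.MapsTo (fun r ↦ #{t ∈ T | f t < f r}) T (range #T) := fun r hr ↦ by
    simpa using card_lt_card (filter_ssubset (s := T).2 ⟨r, hr, lt_irrefl (f r)⟩)
  obtain ⟨r, hr, hrj⟩ := surjOn_of_injOn_of_card_le _ hmaps hinj (by simp) (by simpa using hj)
  exact ⟨r, ⟨hr, hrj⟩, fun s hs ↦ hinj hs.1 hr (hs.2.trans hrj.symm)⟩

theorem sum_card_filter_perm {ι α : Type*} [Fintype ι] (e : ι → Equiv.Perm α) {W : Finset α}
    (hW : ∀ i a, e i a ∈ W ↔ a ∈ W) (P : α → Prop) [DecidablePred P] :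
    ∑ a ∈ W, #{i | P (e i a)} = Fintype.card ι * #{a ∈ W | P a} := by
  have hcard (i : ι) : #{a ∈ W | P (e i a)} = #{a ∈ W | P a} :=
    card_equiv (e i) fun a ↦ by simp [hW]
  calc ∑ a ∈ W, #{i | P (e i a)} = ∑ i, #{a ∈ W | P (e i a)} := by
        simp only [card_filter]
        exact sum_comm
    _ = Fintype.card ι * #{a ∈ W | P a} := by simp [hcard]

theorem card_filter_piFinset_insertNth {α : Type*} {N : ℕ} (S : Finset α) (i : Fin (N + 1))
    (P : (Fin (N + 1) → α) → Prop) [DecidablePred P] :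
    #{p ∈ Fintype.piFinset fun _ ↦ S | P p} =
      ∑ s ∈ S, #{w ∈ Fintype.piFinset fun _ ↦ S | P (i.insertNth s w)} := by
  have hprod : #{p ∈ Fintype.piFinset fun _ ↦ S | P p} =
      #{x ∈ S ×ˢ Fintype.piFinset fun _ ↦ S | P (i.insertNth x.1 x.2)} := by
    refine (card_equiv (Fin.insertNthEquiv (fun _ ↦ α) i) fun x ↦ ?_).symm
    simp [Fin.insertNthEquiv, i.forall_iff_succAbove]
  rw [hprod, card_filter, sum_product]
  simp only [card_filter]

section Rotation

variable {N : ℕ}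

/-- Cyclic rotation of a word: `rotate r p` reads `p` cyclically, starting at position `r`. -/
def rotate {α : Type*} (r : Fin (N + 1)) : Equiv.Perm (Fin (N + 1) → α) :=
  (Equiv.addRight r).symm.arrowCongr (Equiv.refl α)

@[simp]
theorem rotate_apply {α : Type*} (r : Fin (N + 1)) (p : Fin (N + 1) → α) (i : Fin (N + 1)) :
    rotate r p i = p (i + r) := rfl

/-- The height after `m` steps of the periodic extension of `p`, so that `m` may exceed the length
of `p`. -/
def height (p : Fin (N + 1) → ℤ) (m : ℕ) : ℤ :=
  ∑ i ∈ range m, p (Fin.ofNat (N + 1) i)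

theorem psum_eq_height (p : Fin (N + 1) → ℤ) {m : ℕ} (hm : m ≤ N + 1) : psum p m = height p m := by
  refine sum_bij (fun i _ ↦ i) (by simp) (fun _ _ _ _ ↦ Fin.ext)
    (fun i hi ↦ ⟨⟨i, (mem_range.1 hi).trans_le hm⟩, by simpa using hi, rfl⟩) (by simp)

theorem height_period (p : Fin (N + 1) → ℤ) : height p (N + 1) = ∑ i, p i := by
  simp [height, sum_range]

theorem height_period_add (p : Fin (N + 1) → ℤ) (m : ℕ) :
    height p (N + 1 + m) = height p (N + 1) + height p m := by
  simp only [height, sum_range_add, add_right_inj]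
  exact sum_congr rfl fun i _ ↦ congrArg p (Fin.ext (by simp))

theorem height_rotate (r : Fin (N + 1)) (p : Fin (N + 1) → ℤ) (m : ℕ) :
    height (rotate r p) m = height p (r + m) - height p r := by
  simp only [height, sum_range_add, add_sub_cancel_left, rotate_apply]
  exact sum_congr rfl fun i _ ↦ congrArg p (Fin.ext (by simp [Fin.val_add, add_comm]))

/-- `N + 1` times the height of the path above the line of slope `1 / (N + 1)`. For a path with
total displacement `1` this line joins the endpoints of each period. -/
def tiltedHeight (p : Fin (N + 1) → ℤ) (m : ℕ) : ℤ :=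
  (N + 1) * height p m - m

theorem tiltedHeight_periodic {p : Fin (N + 1) → ℤ} (hp : ∑ i, p i = 1) :
    Function.Periodic (tiltedHeight p) (N + 1) := by
  intro m
  rw [tiltedHeight, add_comm m, height_period_add, height_period, hp, tiltedHeight]
  push_cast
  ring

theorem tiltedHeight_rotate {p : Fin (N + 1) → ℤ} (hp : ∑ i, p i = 1) (r t : Fin (N + 1)) :
    tiltedHeight (rotate r p) t = tiltedHeight p ↑(t + r) - tiltedHeight p r := by
  rw [Fin.val_add, (tiltedHeight_periodic hp).map_mod_nat, add_comm (t : ℕ)]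
  simp only [tiltedHeight, height_rotate]
  push_cast
  ring

theorem tiltedHeight_injective (p : Fin (N + 1) → ℤ) :
    Function.Injective fun t : Fin (N + 1) ↦ tiltedHeight p t := by
  intro s t hst
  have hdvd : ((N + 1 : ℕ) : ℤ) ∣ t - s :=
    ⟨height p t - height p s, by simp only [tiltedHeight] at hst; push_cast; linarith⟩
  exact Fin.ext (Nat.ModEq.eq_of_lt_of_lt (Nat.modEq_iff_dvd.2 hdvd) s.isLt t.isLt)

theorem tiltedHeight_neg_iff (p : Fin (N + 1) → ℤ) (t : Fin (N + 1)) :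
    tiltedHeight p t < 0 ↔ t ≠ 0 ∧ height p t ≤ 0 := by
  obtain rfl | ht := eq_or_ne t 0
  · simp [tiltedHeight, height]
  have hpos : 0 < (t : ℤ) := by exact_mod_cast Nat.pos_of_ne_zero (Fin.val_ne_zero_iff.2 ht)
  have hlt : (t : ℤ) < N + 1 := by exact_mod_cast t.isLt
  simp only [tiltedHeight, ht, ne_eq, not_false_eq_true, true_and]
  constructor <;> intro h <;> nlinarith

/-- The number of positions `t ≠ 0` in `S` at which the path `p` is on or below the axis. -/
def lowCount (S : Finset (Fin (N + 1))) (p : Fin (N + 1) → ℤ) : ℕ :=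
  #(S.filter fun t : Fin (N + 1) ↦ t ≠ 0 ∧ height p t ≤ 0)

variable {T : (Fin (N + 1) → ℤ) → Finset (Fin (N + 1))}

theorem lowCount_rotate (hT : ∀ r p t, t ∈ T (rotate r p) ↔ t + r ∈ T p)
    {p : Fin (N + 1) → ℤ} (hp : ∑ i, p i = 1) (r : Fin (N + 1)) :
    lowCount (T (rotate r p)) (rotate r p) =
      #((T p).filter fun t : Fin (N + 1) ↦ tiltedHeight p t < tiltedHeight p r) := by
  refine card_equiv (Equiv.addRight r) fun t ↦ ?_
  simp only [mem_filter, hT, ← tiltedHeight_neg_iff, tiltedHeight_rotate hp, sub_neg,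
    Equiv.coe_addRight]

theorem card_rotations_lowCount_eq (hT : ∀ r p t, t ∈ T (rotate r p) ↔ t + r ∈ T p)
    {p : Fin (N + 1) → ℤ} (hp : ∑ i, p i = 1) {j : ℕ} (hj : j < #(T p)) :
    #{r | 0 ∈ T (rotate r p) ∧ lowCount (T (rotate r p)) (rotate r p) = j} = 1 := by
  rw [card_eq_one_iff_existsUnique]
  simpa only [mem_filter_univ, hT, zero_add, lowCount_rotate hT hp] using
    existsUnique_card_filter_lt_eq (tiltedHeight_injective p).injOn hj

theorem card_lowCount_eq_mul (hT : ∀ r p t, t ∈ T (rotate r p) ↔ t + r ∈ T p)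
    {W : Finset (Fin (N + 1) → ℤ)} (hW : ∀ r p, rotate r p ∈ W ↔ p ∈ W)
    (hsum : ∀ p ∈ W, ∑ i, p i = 1) {k : ℕ} (hk : ∀ p ∈ W, #(T p) = k) {j : ℕ} (hj : j < k) :
    #{p ∈ W | 0 ∈ T p ∧ lowCount (T p) p = j} * k = #{p ∈ W | 0 ∈ T p} := by
  have hmarked : #W * k = (N + 1) * #{p ∈ W | 0 ∈ T p} := calc
    #W * k = ∑ p ∈ W, #{r | 0 ∈ T (rotate r p)} := by
      rw [← smul_eq_mul, ← sum_const]
      exact sum_congr rfl fun p hp ↦ by simp [hT, hk p hp]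
    _ = (N + 1) * #{p ∈ W | 0 ∈ T p} := by
      rw [sum_card_filter_perm rotate hW fun p ↦ 0 ∈ T p, Fintype.card_fin]
  have hlow : #W = (N + 1) * #{p ∈ W | 0 ∈ T p ∧ lowCount (T p) p = j} := calc
    #W = ∑ p ∈ W, #{r | 0 ∈ T (rotate r p) ∧ lowCount (T (rotate r p)) (rotate r p) = j} := by
      rw [card_eq_sum_ones]
      exact sum_congr rfl fun p hp ↦
        (card_rotations_lowCount_eq hT (hsum p hp) ((hk p hp).symm ▸ hj)).symm
    _ = (N + 1) * #{p ∈ W | 0 ∈ T p ∧ lowCount (T p) p = j} := by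
      rw [sum_card_filter_perm rotate hW fun p ↦ 0 ∈ T p ∧ lowCount (T p) p = j,
        Fintype.card_fin]
  refine Nat.eq_of_mul_eq_mul_left N.succ_pos ?_
  rw [Nat.succ_eq_add_one, ← hmarked, hlow, mul_assoc]

end Rotation

section Paths

variable {N : ℕ}

/-- The paths with `N` steps, each of them `1` or `-1`. -/
def stepPaths (N : ℕ) : Finset (Fin N → ℤ) :=
  Fintype.piFinset fun _ ↦ {1, -1}

@[simp]
theorem mem_stepPaths {p : Fin N → ℤ} : p ∈ stepPaths N ↔ ∀ i, p i = 1 ∨ p i = -1 := by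
  simp [stepPaths]

theorem card_filter_stepPaths_succ (i : Fin (N + 1)) (P : (Fin (N + 1) → ℤ) → Prop)
    [DecidablePred P] :
    #{p ∈ stepPaths (N + 1) | P p} = #{w ∈ stepPaths N | P (i.insertNth 1 w)} +
      #{w ∈ stepPaths N | P (i.insertNth (-1) w)} := by
  rw [stepPaths, card_filter_piFinset_insertNth _ i, sum_pair (by decide), stepPaths]

/-- The number of up steps. -/
def upCount (p : Fin N → ℤ) : ℕ :=
  #{i | p i = 1}

theorem upCount_insertNth (i : Fin (N + 1)) (s : ℤ) (w : Fin N → ℤ) :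
    upCount (i.insertNth s w : Fin (N + 1) → ℤ) = (if s = 1 then 1 else 0) + upCount w := by
  simp only [upCount, card_filter, Fin.sum_univ_succAbove _ i, Fin.insertNth_apply_same,
    Fin.insertNth_apply_succAbove]

theorem upCount_le (p : Fin N → ℤ) : upCount p ≤ N :=
  (card_filter_le _ _).trans_eq (by simp)

theorem sum_eq_two_mul_upCount_sub {p : Fin N → ℤ} (hp : p ∈ stepPaths N) :
    ∑ i, p i = 2 * upCount p - N := by
  have hstep (i : Fin N) : p i = 2 * (if p i = 1 then 1 else 0) - 1 := by
    rcases mem_stepPaths.1 hp i with h | h <;> simp [h]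
  rw [sum_congr rfl fun i _ ↦ hstep i, sum_sub_distrib, ← mul_sum, sum_boole]
  simp [upCount]

/-- The number of peaks, that is, of up steps immediately followed by a down step. -/
def peakCount (p : Fin (N + 1) → ℤ) : ℕ :=
  #{i : Fin N | p i.castSucc = 1 ∧ p i.succ = -1}

theorem peakCount_cons (s : ℤ) (p : Fin (N + 1) → ℤ) :
    peakCount (Fin.cons s p : Fin (N + 2) → ℤ) =
      (if s = 1 ∧ p 0 = -1 then 1 else 0) + peakCount p := by
  simp only [peakCount, card_filter, Fin.sum_univ_succ (n := N), Fin.castSucc_zero, Fin.cons_zero,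
    Fin.cons_succ, ← Fin.succ_castSucc]

theorem peakCount_snoc_one (p : Fin (N + 1) → ℤ) :
    peakCount (Fin.snoc p 1 : Fin (N + 2) → ℤ) = peakCount p := by
  simp only [peakCount, card_filter, Fin.sum_univ_castSucc (n := N), Fin.succ_last, Fin.snoc_last,
    Fin.snoc_castSucc, Fin.succ_castSucc]
  simp

/-- The number of paths `w` with `N` steps, `a` of them up, such that the path consisting of the
step `s` followed by `w` has `m` peaks. -/
def continuationCount (s : ℤ) (N a m : ℕ) : ℕ :=
  #{w ∈ stepPaths N | upCount w = a ∧ peakCount (Fin.cons s w : Fin (N + 1) → ℤ) = m}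

theorem continuationCount_zero (s : ℤ) (a m : ℕ) :
    continuationCount s 0 a m = if a = 0 ∧ m = 0 then 1 else 0 := by
  rw [continuationCount, card_filter]
  simp [stepPaths, upCount, peakCount, eq_comm]

theorem continuationCount_succ (s : ℤ) (N a m : ℕ) :
    continuationCount s (N + 1) a m =
      #{w ∈ stepPaths N | 1 + upCount w = a ∧
        peakCount (Fin.cons 1 w : Fin (N + 1) → ℤ) = m} +
      #{w ∈ stepPaths N | upCount w = a ∧
        (if s = 1 then 1 else 0) + peakCount (Fin.cons (-1) w : Fin (N + 1) → ℤ) = m} := by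
  simp only [continuationCount, card_filter_stepPaths_succ 0, upCount_insertNth]
  simp [peakCount_cons s]

theorem continuationCount_eq_zero {N a : ℕ} (s : ℤ) (h : N < a) (m : ℕ) :
    continuationCount s N a m = 0 := by
  rw [continuationCount, card_eq_zero, filter_eq_empty_iff]
  exact fun w _ hw ↦ ((upCount_le w).trans_lt h).ne hw.1

theorem continuationCount_neg_one_zero (N m : ℕ) :
    continuationCount (-1) (N + 1) 0 m = continuationCount (-1) N 0 m := by
  rw [continuationCount_succ]
  simp [continuationCount]

theorem continuationCount_neg_one_succ (N a m : ℕ) :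
    continuationCount (-1) (N + 1) (a + 1) m =
      continuationCount 1 N a m + continuationCount (-1) N (a + 1) m := by
  rw [continuationCount_succ]
  simp [continuationCount, add_comm 1]

theorem continuationCount_one_zero_zero (N : ℕ) :
    continuationCount 1 (N + 1) 0 0 = 0 := by
  simp [continuationCount_succ]

theorem continuationCount_one_zero_succ (N m : ℕ) :
    continuationCount 1 (N + 1) 0 (m + 1) = continuationCount (-1) N 0 m := by
  rw [continuationCount_succ]
  simp [continuationCount, add_comm 1]

theorem continuationCount_one_succ_zero (N a : ℕ) :
    continuationCount 1 (N + 1) (a + 1) 0 = continuationCount 1 N a 0 := by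
  rw [continuationCount_succ]
  simp [continuationCount, add_comm 1]

theorem continuationCount_one_succ_succ (N a m : ℕ) :
    continuationCount 1 (N + 1) (a + 1) (m + 1) =
      continuationCount 1 N a (m + 1) + continuationCount (-1) N (a + 1) m := by
  rw [continuationCount_succ]
  simp [continuationCount, add_comm 1]

/-- The number of compositions of `b` into `m` positive parts. -/
def compositionCount : ℕ → ℕ → ℕ
  | 0, 0 => 1
  | 0, _ + 1 => 0
  | _ + 1, 0 => 0
  | b + 1, m + 1 => b.choose m

theorem compositionCount_succ_add_choose (b m : ℕ) :
    compositionCount (b + 1) m + b.choose m = (b + 1).choose m := by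
  cases m <;> simp [compositionCount, Nat.choose_succ_succ]

theorem continuationCount_eq (N : ℕ) : ∀ a b m, a + b = N →
    continuationCount (-1) N a m = a.choose m * b.choose m ∧
      continuationCount 1 N a m = (a + 1).choose m * compositionCount b m := by
  induction N with
  | zero =>
    intro a b m h
    obtain ⟨rfl, rfl⟩ := Nat.add_eq_zero_iff.1 h
    cases m <;> simp [continuationCount_zero, compositionCount]
  | succ N ih =>
    intro a b m h
    constructor
    · rcases a with _ | a
      · rw [continuationCount_neg_one_zero, (ih 0 N m (by omega)).1]
        cases m <;> simp
      · rw [continuationCount_neg_one_succ, (ih a b m (by omega)).2]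
        rcases b with _ | b
        · rw [continuationCount_eq_zero _ (by omega)]
          cases m <;> simp [compositionCount]
        · rw [(ih (a + 1) b m (by omega)).1, ← mul_add, compositionCount_succ_add_choose]
    · rcases a with _ | a <;> rcases m with _ | m
      · obtain rfl : b = N + 1 := by omega
        simp [continuationCount_one_zero_zero, compositionCount]
      · obtain rfl : b = N + 1 := by omega
        rw [continuationCount_one_zero_succ, (ih 0 N m (by omega)).1]
        cases m <;> simp [compositionCount, Nat.choose_eq_zero_of_lt]
      · rw [continuationCount_one_succ_zero, (ih a b 0 (by omega)).2]
        simp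
      · rw [continuationCount_one_succ_succ, (ih a b _ (by omega)).2]
        rcases b with _ | b
        · rw [continuationCount_eq_zero _ (by omega)]
          simp [compositionCount]
        · rw [(ih (a + 1) b m (by omega)).1, compositionCount, Nat.choose_succ_succ (a + 1) m]
          ring

theorem card_rooted_paths {a b N : ℕ} (h : a + b + 1 = N) (m : ℕ) :
    #{p ∈ stepPaths (N + 1) |
      upCount p = a + 1 ∧ p 0 = -1 ∧ p (Fin.last N) = 1 ∧ peakCount p = m} =
      a.choose m * b.choose m := by
  subst h
  rw [← (continuationCount_eq _ a b m rfl).1, continuationCount, card_filter_stepPaths_succ 0,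
    card_filter_stepPaths_succ (Fin.last _), card_filter_stepPaths_succ (Fin.last _)]
  simp only [upCount_insertNth]
  simp [Fin.insertNth_zero', Fin.insertNth_last', Fin.cons_snoc_eq_snoc_cons, peakCount_snoc_one,
    add_comm 1]

/-- The positions of the down steps of the cyclic peaks of `p`, so that `t` is the abscissa of
its peak; a path from a down step to an up step has a cyclic peak at `0`. -/
def cyclicPeaks (p : Fin (N + 1) → ℤ) : Finset (Fin (N + 1)) :=
  {t | p (t - 1) = 1 ∧ p t = -1}

theorem mem_cyclicPeaks_rotate (r : Fin (N + 1)) (p : Fin (N + 1) → ℤ) (t : Fin (N + 1)) :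
    t ∈ cyclicPeaks (rotate r p) ↔ t + r ∈ cyclicPeaks p := by
  simp [cyclicPeaks, sub_add_eq_add_sub]

theorem zero_mem_cyclicPeaks {p : Fin (N + 1) → ℤ} :
    0 ∈ cyclicPeaks p ↔ p 0 = -1 ∧ p (Fin.last N) = 1 := by
  have hlast : (0 - 1 : Fin (N + 1)) = Fin.last N := by rw [sub_eq_iff_eq_add, Fin.last_add_one]
  simp [cyclicPeaks, hlast, and_comm]

theorem succ_mem_cyclicPeaks {p : Fin (N + 1) → ℤ} {i : Fin N} :
    i.succ ∈ cyclicPeaks p ↔ p i.castSucc = 1 ∧ p i.succ = -1 := by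
  have hpred : i.succ - 1 = i.castSucc := by simp [sub_eq_iff_eq_add]
  simp [cyclicPeaks, hpred]

theorem card_cyclicPeaks {p : Fin (N + 1) → ℤ} (h : 0 ∈ cyclicPeaks p) :
    #(cyclicPeaks p) = peakCount p + 1 := by
  rw [← filter_univ_mem (cyclicPeaks p), Fin.card_filter_univ_succ, if_pos h]
  simp only [succ_mem_cyclicPeaks, peakCount]

theorem lowCount_cyclicPeaks (p : Fin (N + 1) → ℤ) :
    lowCount (cyclicPeaks p) p =
      #{i : Fin N | p i.castSucc = 1 ∧ p i.succ = -1 ∧ psum p (i + 1) ≤ 0} := by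
  rw [lowCount, ← filter_univ_mem (cyclicPeaks p), filter_filter, Fin.card_filter_univ_succ]
  simp [succ_mem_cyclicPeaks, and_assoc, psum_eq_height]

theorem card_cyclicPeaks_rotate (r : Fin (N + 1)) (p : Fin (N + 1) → ℤ) :
    #(cyclicPeaks (rotate r p)) = #(cyclicPeaks p) :=
  card_equiv (Equiv.addRight r) (mem_cyclicPeaks_rotate r p)

theorem upCount_rotate (r : Fin (N + 1)) (p : Fin (N + 1) → ℤ) :
    upCount (rotate r p) = upCount p := by
  unfold upCount
  exact card_equiv (Equiv.addRight r) fun i ↦ by rw [mem_filter_univ, mem_filter_univ]; rfl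

theorem rotate_mem_stepPaths (r : Fin (N + 1)) (p : Fin (N + 1) → ℤ) :
    rotate r p ∈ stepPaths (N + 1) ↔ p ∈ stepPaths (N + 1) := by
  simp only [mem_stepPaths, rotate_apply]
  exact (Equiv.addRight r).forall_congr fun _ ↦ Iff.rfl

/-- The paths with `n + 1` up steps and `n` down steps that have `k` cyclic peaks. -/
def cyclicPaths (n k : ℕ) : Finset (Fin (2 * n + 1) → ℤ) :=
  {p ∈ stepPaths (2 * n + 1) | upCount p = n + 1 ∧ #(cyclicPeaks p) = k}

theorem rotate_mem_cyclicPaths {n k : ℕ} (r : Fin (2 * n + 1)) (p : Fin (2 * n + 1) → ℤ) :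
    rotate r p ∈ cyclicPaths n k ↔ p ∈ cyclicPaths n k := by
  simp only [cyclicPaths, mem_filter, rotate_mem_stepPaths, upCount_rotate, card_cyclicPeaks_rotate]

theorem sum_eq_one_of_mem_cyclicPaths {n k : ℕ} {p : Fin (2 * n + 1) → ℤ}
    (hp : p ∈ cyclicPaths n k) : ∑ i, p i = 1 := by
  obtain ⟨hstep, hup, -⟩ := mem_filter.1 hp
  rw [sum_eq_two_mul_upCount_sub hstep, hup]
  push_cast
  ring

theorem card_cyclicPaths_lowCount_mul {n k j : ℕ} (hj : j < k) :
    #{p ∈ cyclicPaths n k | 0 ∈ cyclicPeaks p ∧ lowCount (cyclicPeaks p) p = j} * k =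
      #{p ∈ cyclicPaths n k | 0 ∈ cyclicPeaks p} :=
  card_lowCount_eq_mul mem_cyclicPeaks_rotate rotate_mem_cyclicPaths
    (fun _ ↦ sum_eq_one_of_mem_cyclicPaths) (fun _ hp ↦ (mem_filter.1 hp).2.2) hj

theorem mem_cyclicPaths_and_zero_mem_cyclicPeaks {n m : ℕ} {p : Fin (2 * n + 1) → ℤ} :
    p ∈ cyclicPaths n (m + 1) ∧ 0 ∈ cyclicPeaks p ↔ p ∈ stepPaths (2 * n + 1) ∧
      upCount p = n + 1 ∧ p 0 = -1 ∧ p (Fin.last (2 * n)) = 1 ∧ peakCount p = m := by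
  rw [← and_assoc (a := p 0 = -1), ← zero_mem_cyclicPeaks, cyclicPaths, mem_filter, and_assoc,
    and_assoc, and_comm (b := 0 ∈ cyclicPeaks p)]
  refine and_congr_right fun _ ↦ and_congr_right fun _ ↦ and_congr_right fun h ↦ ?_
  rw [card_cyclicPeaks h, add_left_inj]

theorem card_cyclicPaths_zero_mem (n m : ℕ) :
    #{p ∈ cyclicPaths (n + 1) (m + 1) | 0 ∈ cyclicPeaks p} = (n + 1).choose m * n.choose m := by
  rw [← card_rooted_paths (N := 2 * (n + 1)) (by ring) m]
  congr 1
  ext p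
  rw [mem_filter, mem_filter, mem_cyclicPaths_and_zero_mem_cyclicPeaks]

end Paths

/-- Among paths in 𝒫(n,1,1) starting with a down step and ending with an up step
having exactly `k-1` peaks, for each `0 ≤ j ≤ k-1` the number with exactly `j`
peaks on or below the x-axis is `(1/k)·C(n,k-1)·C(n-1,k-1)`. -/
theorem narayana_chung_feller_peaks (n k : ℕ) (hn : 1 ≤ n) (hk1 : 1 ≤ k) (hk2 : k ≤ n)
    (j : ℕ) (hj : j ≤ k - 1) :
    Nat.card {p : Fin (2*n+1) → ℤ //
      (∀ i, p i = 1 ∨ p i = -1) ∧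
      (univ.filter (fun i => p i = 1)).card = n + 1 ∧
      p ⟨0, Nat.succ_pos _⟩ = -1 ∧
      p (Fin.last (2*n)) = 1 ∧
      (univ.filter (fun i : Fin (2*n) => p i.castSucc = 1 ∧ p i.succ = -1)).card = k - 1 ∧
      (univ.filter (fun i : Fin (2*n) =>
        p i.castSucc = 1 ∧ p i.succ = -1 ∧ psum p ((i : ℕ) + 1) ≤ 0)).card = j }
      * k = Nat.choose n (k-1) * Nat.choose (n-1) (k-1) := by
  obtain ⟨n, rfl⟩ := Nat.exists_eq_add_of_le' hn
  obtain ⟨m, rfl⟩ := Nat.exists_eq_add_of_le' hk1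
  simp only [Nat.add_sub_cancel] at hj ⊢
  rw [← card_cyclicPaths_zero_mem, ← card_cyclicPaths_lowCount_mul (Nat.lt_succ_of_le hj)]
  congr 1
  refine Nat.subtype_card _ fun p ↦ ?_
  rw [mem_filter, ← and_assoc, mem_cyclicPaths_and_zero_mem_cyclicPeaks, mem_stepPaths,
    lowCount_cyclicPeaks]
  simp only [upCount, peakCount, and_assoc]
  rfl
end

section
/- Let n ≥ 1 and 1 ≤ k ≤ n. For each j with 0 ≤ j ≤ n−k, the number of paths p in 𝒫(n,1,1) with p_1 = +1 and p_{2n+1} = +1 that have exactly n−k double rises, of which exactly j lie on or below the x-axis, equals (1/(n−k+1))·C(n,k)·C(n−1,k−1). -/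
open Finset

/-!
Prescribe `r` double rises and close the path up cyclically: it has `r + 1` cyclic double rises,
one of them at the junction of the last and the first step. Shearing a path of length `N` and total
height `1` to the heights `N * s_i - i` makes them periodic and pairwise distinct, and a double rise
lies on or below the axis iff its sheared height is below that of the junction. So cutting the
cyclic path at the `r + 1` cyclic double rises realises each of the ranks `j = 0, ..., r` exactly
once, and the paths are equidistributed over the values of `j`.

The paths with `r` double rises, whatever the value of `j`, are counted by removing the first step.
-/

namespace ChungFeller

section Rank

variable {α β : Type*} [LinearOrder β]

lemma strictMonoOn_card_filter_lt (s : Finset β) :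
    StrictMonoOn (fun a => #{b ∈ s | b < a}) s := by
  intro a ha b _ hab
  refine card_lt_card ((ssubset_iff_of_subset ?_).2 ⟨a, by simpa using ⟨ha, hab⟩, by simp⟩)
  exact monotone_filter_right s fun c _ hc => hc.trans hab

lemma existsUnique_card_filter_lt_eq (s : Finset β) {j : ℕ} (hj : j < #s) :
    ∃! a, a ∈ s ∧ #{b ∈ s | b < a} = j := by
  have hinj := (strictMonoOn_card_filter_lt s).injOn
  have hmaps : Set.MapsTo (fun a => #{b ∈ s | b < a}) s (range #s) := fun a ha =>
    mem_coe.2 <| mem_range.2 <| card_lt_card <|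
      filter_ssubset.2 ⟨a, ha, lt_irrefl a⟩
  obtain ⟨a, ha, rfl⟩ := surjOn_of_injOn_of_card_le _ hmaps hinj (by simp)
    (mem_coe.2 <| mem_range.2 hj)
  exact ⟨a, ⟨ha, rfl⟩, fun b hb => hinj hb.1 ha hb.2⟩

lemma card_filter_rank_eq_one (s : Finset α) {f : α → β} (hf : f.Injective) {j : ℕ}
    (hj : j < #s) : #{a ∈ s | #{b ∈ s | f b < f a} = j} = 1 := by
  let := LinearOrder.lift' f hf
  obtain ⟨a, ha, huniq⟩ := existsUnique_card_filter_lt_eq s hj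
  refine card_eq_one.2 ⟨a, Finset.ext fun b => ?_⟩
  rw [mem_filter, mem_singleton]
  exact ⟨huniq b, fun hb => hb ▸ ha⟩

end Rank

section Rotation

variable {G α : Type*} [AddGroup G]

/-- The cyclic rotation of `p` by `v`: the word read off from position `v` onwards. -/
def rotate (v : G) (p : G → α) : G → α := fun i => p (i + v)

lemma rotate_neg_rotate (v : G) (p : G → α) : rotate (-v) (rotate v p) = p := by
  funext i; simp [rotate]

lemma rotate_rotate_neg (v : G) (p : G → α) : rotate v (rotate (-v) p) = p := by
  funext i; simp [rotate]

lemma sum_card_filter_rotate [Fintype G] {S : Finset (G → α)}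
    (hS : ∀ v, ∀ p ∈ S, rotate v p ∈ S) (R : (G → α) → Prop) [DecidablePred R] :
    ∑ p ∈ S, #{v | R (rotate v p)} = Fintype.card G * #{p ∈ S | R p} := by
  have hv : ∀ v, #{p ∈ S | R (rotate v p)} = #{p ∈ S | R p} := fun v =>
    card_nbij' (rotate v) (rotate (-v))
      (fun p hp => by
        rw [mem_coe, mem_filter] at hp ⊢
        exact ⟨hS v p hp.1, hp.2⟩)
      (fun p hp => by
        rw [mem_coe, mem_filter] at hp ⊢
        exact ⟨hS (-v) p hp.1, by rw [rotate_rotate_neg]; exact hp.2⟩)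
      (fun p _ => rotate_neg_rotate v p) (fun p _ => rotate_rotate_neg v p)
  calc ∑ p ∈ S, #{v | R (rotate v p)}
      = ∑ v, #{p ∈ S | R (rotate v p)} :=
        sum_card_bipartiteAbove_eq_sum_card_bipartiteBelow fun p v => R (rotate v p)
    _ = Fintype.card G * #{p ∈ S | R p} := by simp [hv]

/-- A marking `E` of the positions of cyclic words is equivariant if rotating a word rotates its
marked positions. -/
def IsEquivariant (E : (G → α) → Finset G) : Prop :=
  ∀ v p i, i ∈ E (rotate v p) ↔ i + v ∈ E p

lemma IsEquivariant.card_filter_rotate {E : (G → α) → Finset G} (hE : IsEquivariant E) (v : G)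
    (p : G → α) (Q : G → Prop) [DecidablePred Q] :
    #{i ∈ E (rotate v p) | Q (i + v)} = #{i ∈ E p | Q i} :=
  card_equiv (Equiv.addRight v) fun i => by simp [hE v p i]

lemma IsEquivariant.card_rotate {E : (G → α) → Finset G} (hE : IsEquivariant E) (v : G)
    (p : G → α) : #(E (rotate v p)) = #(E p) :=
  card_equiv (Equiv.addRight v) (hE v p)

end Rotation

section PartialSums

variable {N : ℕ}

lemma psum_zero (p : Fin N → ℤ) : psum p 0 = 0 := by
  simp [psum]

lemma psum_add_one (p : Fin N → ℤ) (i : Fin N) : psum p (i + 1) = psum p i + p i := by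
  have hset : univ.filter (fun j : Fin N => (j : ℕ) < i + 1) =
      insert i (univ.filter fun j : Fin N => (j : ℕ) < i) := by
    ext j
    simp only [mem_filter_univ, mem_insert, Fin.ext_iff]
    omega
  rw [psum, hset, sum_insert (by simp), add_comm, psum]

lemma psum_length (p : Fin N → ℤ) : psum p N = ∑ i, p i := by
  simp [psum]

end PartialSums

section TiltedHeight

variable {L : ℕ} {p : Fin (L + 1) → ℤ}

/-- The heights of a path of total height `1`, sheared so as to become periodic in the position. -/
def tiltedHeight (p : Fin (L + 1) → ℤ) (i : Fin (L + 1)) : ℤ := (L + 1) * psum p i - i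

lemma tiltedHeight_zero (p : Fin (L + 1) → ℤ) : tiltedHeight p 0 = 0 := by
  simp [tiltedHeight, psum_zero]

lemma tiltedHeight_add_one (hp : ∑ i, p i = 1) (i : Fin (L + 1)) :
    tiltedHeight p (i + 1) = tiltedHeight p i + ((L + 1) * p i - 1) := by
  induction i using Fin.lastCases with
  | last =>
    have hlast : psum p L + p (Fin.last L) = 1 := by
      rw [← hp, ← psum_length]; exact (psum_add_one p (Fin.last L)).symm
    rw [Fin.last_add_one, tiltedHeight_zero, tiltedHeight, Fin.val_last]
    linear_combination (-(L : ℤ) - 1) * hlast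
  | cast i =>
    have hstep := psum_add_one p i.castSucc
    rw [Fin.coeSucc_eq_succ, tiltedHeight, tiltedHeight, Fin.val_succ, ← Fin.val_castSucc, hstep]
    push_cast
    ring

lemma tiltedHeight_rotate (hp : ∑ i, p i = 1) (v i : Fin (L + 1)) :
    tiltedHeight (rotate v p) i = tiltedHeight p (i + v) - tiltedHeight p v := by
  have hrot : ∑ i, rotate v p i = 1 := (Equiv.sum_comp (Equiv.addRight v) p).trans hp
  induction i using Fin.induction with
  | zero => rw [tiltedHeight_zero, zero_add, sub_self]
  | succ i ih =>
    rw [← Fin.coeSucc_eq_succ, tiltedHeight_add_one hrot, ih, add_right_comm,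
      tiltedHeight_add_one hp, rotate]
    ring

lemma tiltedHeight_injective (p : Fin (L + 1) → ℤ) : (tiltedHeight p).Injective := by
  intro a b hab
  have hdvd : (L + 1 : ℤ) ∣ a - b := ⟨psum p a - psum p b, by
    simp only [tiltedHeight] at hab
    linear_combination -hab⟩
  have hzero := Int.eq_zero_of_abs_lt_dvd hdvd (by rw [abs_lt]; omega)
  exact Fin.ext (by omega)

lemma tiltedHeight_neg_iff (p : Fin (L + 1) → ℤ) (i : Fin (L + 1)) :
    tiltedHeight p i < 0 ↔ i ≠ 0 ∧ psum p i ≤ 0 := by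
  rcases eq_or_ne i 0 with rfl | hi
  · simp [tiltedHeight_zero]
  have hpos : 0 < (i : ℤ) := by exact_mod_cast Fin.pos_iff_ne_zero.2 hi
  have hle : (i : ℤ) ≤ L := by exact_mod_cast i.is_le
  refine Iff.trans ?_ (and_iff_right hi).symm
  rw [tiltedHeight]
  constructor <;> intro h
  · by_contra! hs
    nlinarith
  · nlinarith

theorem card_filter_marks_below_mul {S : Finset (Fin (L + 1) → ℤ)} {s j : ℕ}
    {E : (Fin (L + 1) → ℤ) → Finset (Fin (L + 1))} (hS : ∀ v, ∀ p ∈ S, rotate v p ∈ S)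
    (hsum : ∀ p ∈ S, ∑ i, p i = 1) (hE : IsEquivariant E) (hcard : ∀ p ∈ S, #(E p) = s)
    (hj : j < s) :
    #{p ∈ S | 0 ∈ E p ∧ #{i ∈ E p | i ≠ (0 : Fin (L + 1)) ∧ psum p i ≤ 0} = j} * s =
      #{p ∈ S | 0 ∈ E p} := by
  simp only [← tiltedHeight_neg_iff]
  have hmem : ∀ p v, 0 ∈ E (rotate v p) ↔ v ∈ E p := fun p v => by rw [hE, zero_add]
  have hrank : ∀ p ∈ S, ∀ v, #{i ∈ E (rotate v p) | tiltedHeight (rotate v p) i < 0} =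
      #{i ∈ E p | tiltedHeight p i < tiltedHeight p v} := fun p hp v => by
    simp only [tiltedHeight_rotate (hsum p hp), sub_neg]
    exact hE.card_filter_rotate v p fun i => tiltedHeight p i < tiltedHeight p v
  have hmarks : #S * s = Fintype.card (Fin (L + 1)) * #{p ∈ S | 0 ∈ E p} := by
    rw [← sum_card_filter_rotate hS fun p => 0 ∈ E p]
    refine (sum_const_nat fun p hp => ?_).symm
    simp only [hmem, filter_univ_mem, hcard p hp]
  have hranked : #S * 1 = Fintype.card (Fin (L + 1)) *
      #{p ∈ S | 0 ∈ E p ∧ #{i ∈ E p | tiltedHeight p i < 0} = j} := by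
    rw [← sum_card_filter_rotate hS fun p => 0 ∈ E p ∧ #{i ∈ E p | tiltedHeight p i < 0} = j]
    refine (sum_const_nat fun p hp => ?_).symm
    simp only [hmem, hrank p hp, ← filter_filter, filter_univ_mem]
    exact card_filter_rank_eq_one (E p) (tiltedHeight_injective p) (hj.trans_eq (hcard p hp).symm)
  refine Nat.eq_of_mul_eq_mul_left (Fintype.card_pos (α := Fin (L + 1))) ?_
  rw [← mul_assoc, ← hranked, ← hmarks, mul_one]

end TiltedHeight

section SignWords

/-- The words of length `N` in the steps `1` and `-1`. -/
def signWords (N : ℕ) : Finset (Fin N → ℤ) := Fintype.piFinset fun _ => {1, -1}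

/-- The positions of the up steps of a word. -/
def upSteps {N : ℕ} (p : Fin N → ℤ) : Finset (Fin N) := {i | p i = 1}

/-- The double rises of a word, each located at the position of its first up step. -/
def doubleRises {L : ℕ} (p : Fin (L + 1) → ℤ) : Finset (Fin L) :=
  {i | p i.castSucc = 1 ∧ p i.succ = 1}

/-- The double rises of a word that lie on or below the axis. -/
def lowDoubleRises {L : ℕ} (p : Fin (L + 1) → ℤ) : Finset (Fin L) :=
  {i ∈ doubleRises p | psum p (i.val + 1) ≤ 0}

lemma mem_signWords {N : ℕ} {p : Fin N → ℤ} : p ∈ signWords N ↔ ∀ i, p i = 1 ∨ p i = -1 := by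
  simp [signWords]

lemma mem_upSteps {N : ℕ} {p : Fin N → ℤ} {i : Fin N} : i ∈ upSteps p ↔ p i = 1 := by
  simp [upSteps]

lemma sum_eq_two_mul_card_upSteps_sub {N : ℕ} {p : Fin N → ℤ} (hp : p ∈ signWords N) :
    ∑ i, p i = 2 * #(upSteps p) - N := by
  have hstep : ∀ i, p i = 2 * (if p i = 1 then 1 else 0) - 1 := fun i => by
    rcases mem_signWords.1 hp i with h | h <;> simp [h]
  rw [sum_congr rfl fun i _ => hstep i, sum_sub_distrib, ← mul_sum, sum_boole]
  simp [upSteps]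

lemma card_upSteps_cons {N : ℕ} (a : ℤ) (q : Fin N → ℤ) :
    #(upSteps (Fin.cons a q : Fin (N + 1) → ℤ)) = (if a = 1 then 1 else 0) + #(upSteps q) := by
  simp only [upSteps, Fin.card_filter_univ_succ', Fin.cons_zero, Fin.cons_succ]

lemma card_doubleRises_cons {L : ℕ} (a : ℤ) (q : Fin (L + 1) → ℤ) :
    #(doubleRises (Fin.cons a q : Fin (L + 2) → ℤ)) =
      (if a = 1 ∧ q 0 = 1 then 1 else 0) + #(doubleRises q) := by
  simp only [doubleRises, Fin.card_filter_univ_succ', Fin.castSucc_zero, Fin.cons_zero,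
    Fin.cons_succ, ← Fin.succ_castSucc]

lemma card_filter_signWords_succ {N : ℕ} {a : ℤ} (ha : a = 1 ∨ a = -1)
    (R : (Fin (N + 1) → ℤ) → Prop) [DecidablePred R] :
    #{p ∈ signWords (N + 1) | p 0 = a ∧ R p} = #{q ∈ signWords N | R (Fin.cons a q)} := by
  refine card_nbij' Fin.tail (Fin.cons (α := fun _ => ℤ) a) (fun p hp => ?_) (fun q hq => ?_)
    (fun p hp => ?_) fun q _ => Fin.tail_cons (α := fun _ => ℤ) a q
  · obtain ⟨hword, rfl, hR⟩ := mem_filter.1 hp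
    exact mem_filter.2 ⟨mem_signWords.2 fun i => mem_signWords.1 hword i.succ,
      by rwa [Fin.cons_self_tail]⟩
  · obtain ⟨hword, hR⟩ := mem_filter.1 hq
    exact mem_filter.2 ⟨mem_signWords.2 (Fin.cases ha (mem_signWords.1 hword)), rfl, hR⟩
  · obtain ⟨-, rfl, -⟩ := mem_filter.1 hp
    exact Fin.cons_self_tail p

lemma card_filter_signWords_eq_add {L : ℕ} (R : (Fin (L + 1) → ℤ) → Prop) [DecidablePred R] :
    #{p ∈ signWords (L + 1) | R p} =
      #{p ∈ signWords (L + 1) | p 0 = 1 ∧ R p} + #{p ∈ signWords (L + 1) | p 0 = -1 ∧ R p} := by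
  rw [← card_filter_add_card_filter_not (s := {p ∈ signWords (L + 1) | R p}) fun p => p 0 = 1,
    filter_filter, filter_filter]
  congr 2 <;> refine filter_congr fun p hp => ?_
  · exact and_comm
  · rcases mem_signWords.1 hp 0 with h | h <;> simp [h]

/-- The words of length `L + 1` with first step `a` and last step up that have `u` up steps and
`r` double rises. -/
def wordsEndingUp (L : ℕ) (a : ℤ) (u r : ℕ) : Finset (Fin (L + 1) → ℤ) :=
  {p ∈ signWords (L + 1) | p 0 = a ∧ p (Fin.last L) = 1 ∧ #(upSteps p) = u ∧ #(doubleRises p) = r}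

lemma mem_wordsEndingUp {L : ℕ} {a : ℤ} {u r : ℕ} {p : Fin (L + 1) → ℤ} :
    p ∈ wordsEndingUp L a u r ↔ (∀ i, p i = 1 ∨ p i = -1) ∧ p 0 = a ∧ p (Fin.last L) = 1 ∧
      #(upSteps p) = u ∧ #(doubleRises p) = r := by
  rw [wordsEndingUp, mem_filter, mem_signWords]

lemma card_wordsEndingUp_succ {L : ℕ} {a : ℤ} (ha : a = 1 ∨ a = -1) (u r : ℕ) :
    #(wordsEndingUp (L + 1) a u r) =
      #{q ∈ signWords (L + 1) | q 0 = 1 ∧ q (Fin.last L) = 1 ∧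
        (if a = 1 then 1 else 0) + #(upSteps q) = u ∧
        (if a = 1 then 1 else 0) + #(doubleRises q) = r} +
      #{q ∈ signWords (L + 1) | q 0 = -1 ∧ q (Fin.last L) = 1 ∧
        (if a = 1 then 1 else 0) + #(upSteps q) = u ∧ #(doubleRises q) = r} := by
  rw [wordsEndingUp, card_filter_signWords_succ ha, card_filter_signWords_eq_add]
  simp only [card_upSteps_cons, card_doubleRises_cons, ← Fin.succ_last, Fin.cons_succ]
  congr 2 <;> refine filter_congr fun q _ => and_congr_right fun hq => ?_ <;> simp [hq]

lemma card_wordsEndingUp_down (L u r : ℕ) :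
    #(wordsEndingUp (L + 1) (-1) u r) =
      #(wordsEndingUp L 1 u r) + #(wordsEndingUp L (-1) u r) := by
  rw [card_wordsEndingUp_succ (.inr rfl)]
  simp [wordsEndingUp]

lemma card_wordsEndingUp_up_zero (L u : ℕ) :
    #(wordsEndingUp (L + 1) 1 (u + 1) 0) = #(wordsEndingUp L (-1) u 0) := by
  rw [card_wordsEndingUp_succ (.inl rfl)]
  simp [wordsEndingUp, add_comm 1]

lemma card_wordsEndingUp_up_succ (L u r : ℕ) :
    #(wordsEndingUp (L + 1) 1 (u + 1) (r + 1)) =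
      #(wordsEndingUp L 1 u r) + #(wordsEndingUp L (-1) u (r + 1)) := by
  rw [card_wordsEndingUp_succ (.inl rfl)]
  simp [wordsEndingUp, add_comm 1]

lemma lt_and_two_mul_le_of_mem_wordsEndingUp {L u r : ℕ} {p : Fin (L + 1) → ℤ}
    (hp : p ∈ wordsEndingUp L (-1) u r) : r < u ∧ 2 * u ≤ r + (L + 1) := by
  obtain ⟨-, hfirst, hlast, rfl, rfl⟩ := mem_wordsEndingUp.1 hp
  set before : Finset (Fin L) := {i | p i.castSucc = 1}
  set after : Finset (Fin L) := {i | p i.succ = 1}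
  have hbefore : #(upSteps p) = #before + 1 := by
    rw [upSteps, Fin.univ_castSuccEmb, filter_cons, if_pos hlast, card_cons, filter_map, card_map]
    rfl
  have hafter : #(upSteps p) = #after := by
    rw [upSteps, Fin.card_filter_univ_succ', hfirst, if_neg (by decide), zero_add]
  have hinter : doubleRises p = before ∩ after := filter_and ..
  have hunion := card_union_add_card_inter before after
  have hle : #(before ∩ after) ≤ #before := card_le_card inter_subset_left
  have hle' : #(before ∪ after) ≤ L := (card_le_univ _).trans_eq (Fintype.card_fin L)
  rw [hinter]
  omega

lemma wordsEndingUp_down_eq_empty {L u r : ℕ} (h : u ≤ r ∨ r + (L + 1) < 2 * u) :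
    wordsEndingUp L (-1) u r = ∅ :=
  eq_empty_of_forall_notMem fun _ hp => by
    have hbounds := lt_and_two_mul_le_of_mem_wordsEndingUp hp
    omega

lemma wordsEndingUp_zero : wordsEndingUp 0 1 1 0 = {fun _ => 1} := by
  ext p
  rw [mem_singleton]
  constructor
  · intro hp
    funext i
    rw [Fin.eq_zero i]
    exact (mem_wordsEndingUp.1 hp).2.1
  · rintro rfl
    simp [mem_wordsEndingUp, upSteps, doubleRises]

/-- A word with `v` up steps preceded by a down step has `v` runs of down steps and `v + 1` or `v`
runs of up steps. The factors distribute the `r` double rises and the `e` double falls over them. -/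
lemma card_wordsEndingUp (L : ℕ) : ∀ r v e : ℕ,
    (r + 2 * v + e = L →
      #(wordsEndingUp L 1 (r + v + 1) r) = (v + 1).multichoose r * v.multichoose e) ∧
    (r + 2 * v + e = L + 1 →
      #(wordsEndingUp L (-1) (r + v) r) = v.multichoose r * v.multichoose e) := by
  induction L with
  | zero =>
    refine fun r v e => ⟨fun h => ?_, fun h => ?_⟩
    · obtain ⟨rfl, rfl, rfl⟩ : r = 0 ∧ v = 0 ∧ e = 0 := by omega
      simp [wordsEndingUp_zero]
    · obtain rfl : v = 0 := by omega
      rw [wordsEndingUp_down_eq_empty (by omega), card_empty]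
      obtain ⟨rfl, rfl⟩ | ⟨rfl, rfl⟩ : r = 1 ∧ e = 0 ∨ r = 0 ∧ e = 1 := by omega
      all_goals simp
  | succ L ih =>
    refine fun r v e => ⟨fun h => ?_, fun h => ?_⟩
    · obtain _ | r := r
      · rw [card_wordsEndingUp_up_zero, (ih 0 v e).2 h]
        simp
      · rw [card_wordsEndingUp_up_succ, Nat.add_right_comm r 1 v, (ih r v e).1 (by omega),
          Nat.add_right_comm r v 1, (ih (r + 1) v e).2 h, Nat.multichoose_succ_succ]
        ring
    · obtain _ | v := v
      · rw [wordsEndingUp_down_eq_empty (by omega), card_empty]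
        obtain _ | r := r
        · obtain rfl : e = L + 2 := by omega
          simp
        · simp
      · rw [card_wordsEndingUp_down]
        obtain _ | e := e
        · rw [wordsEndingUp_down_eq_empty (by omega), ← Nat.add_assoc, (ih r v 0).1 (by omega)]
          simp
        · rw [(ih r (v + 1) e).2 (by omega), ← Nat.add_assoc, (ih r v (e + 1)).1 (by omega),
            Nat.multichoose_succ_succ v e]
          ring

end SignWords

section CyclicDoubleRises

variable {L : ℕ}

/-- The double rises of a word read cyclically, each located at the position of its second up
step, so that `0` marks a double rise at the junction of the last and the first step. -/
def cyclicDoubleRises (p : Fin (L + 1) → ℤ) : Finset (Fin (L + 1)) :=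
  {i | p (i - 1) = 1 ∧ p i = 1}

lemma isEquivariant_upSteps :
    IsEquivariant (upSteps : (Fin (L + 1) → ℤ) → Finset (Fin (L + 1))) :=
  fun v p i => by simp only [mem_upSteps, rotate]

lemma isEquivariant_cyclicDoubleRises :
    IsEquivariant (cyclicDoubleRises : (Fin (L + 1) → ℤ) → Finset (Fin (L + 1))) :=
  fun v p i => by simp [cyclicDoubleRises, rotate, sub_add_eq_add_sub]

lemma zero_mem_cyclicDoubleRises {p : Fin (L + 1) → ℤ} :
    0 ∈ cyclicDoubleRises p ↔ p 0 = 1 ∧ p (Fin.last L) = 1 := by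
  have hprev : (0 : Fin (L + 1)) - 1 = Fin.last L := by
    rw [sub_eq_iff_eq_add, Fin.last_add_one]
  simp [cyclicDoubleRises, hprev, and_comm]

lemma succ_mem_cyclicDoubleRises {p : Fin (L + 1) → ℤ} {i : Fin L} :
    i.succ ∈ cyclicDoubleRises p ↔ i ∈ doubleRises p := by
  have hprev : i.succ - 1 = i.castSucc := by
    rw [sub_eq_iff_eq_add, Fin.coeSucc_eq_succ]
  simp [cyclicDoubleRises, doubleRises, hprev]

lemma card_cyclicDoubleRises {p : Fin (L + 1) → ℤ} (h : 0 ∈ cyclicDoubleRises p) :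
    #(cyclicDoubleRises p) = #(doubleRises p) + 1 := by
  rw [← filter_univ_mem (cyclicDoubleRises p), Fin.card_filter_univ_succ, if_pos h]
  simp only [succ_mem_cyclicDoubleRises, filter_univ_mem]

lemma card_filter_cyclicDoubleRises (p : Fin (L + 1) → ℤ) :
    #{i ∈ cyclicDoubleRises p | i ≠ (0 : Fin (L + 1)) ∧ psum p i ≤ 0} =
      #(lowDoubleRises p) := by
  rw [← filter_univ_mem (cyclicDoubleRises p), filter_filter, Fin.card_filter_univ_succ']
  simp [lowDoubleRises, succ_mem_cyclicDoubleRises, ← filter_filter]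

theorem card_filter_wordsEndingUp_mul {u r j : ℕ} (hu : 2 * u = L + 2) (hj : j ≤ r) :
    #{p ∈ wordsEndingUp L 1 u r | #(lowDoubleRises p) = j} * (r + 1) =
      #(wordsEndingUp L 1 u r) := by
  let S : Finset (Fin (L + 1) → ℤ) :=
    {p ∈ signWords (L + 1) | #(upSteps p) = u ∧ #(cyclicDoubleRises p) = r + 1}
  have hS : ∀ v, ∀ p ∈ S, rotate v p ∈ S := fun v p hp => by
    rw [mem_filter] at hp ⊢
    rw [isEquivariant_upSteps.card_rotate, isEquivariant_cyclicDoubleRises.card_rotate]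
    exact ⟨mem_signWords.2 fun i => mem_signWords.1 hp.1 (i + v), hp.2⟩
  have hsum : ∀ p ∈ S, ∑ i, p i = 1 := fun p hp => by
    obtain ⟨hword, hups, -⟩ := mem_filter.1 hp
    rw [sum_eq_two_mul_card_upSteps_sub hword, hups]
    omega
  have hwords : {p ∈ S | 0 ∈ cyclicDoubleRises p} = wordsEndingUp L 1 u r := by
    ext p
    simp only [S, mem_wordsEndingUp, mem_filter, mem_signWords]
    grind [zero_mem_cyclicDoubleRises, card_cyclicDoubleRises]
  have hequi := card_filter_marks_below_mul hS hsum isEquivariant_cyclicDoubleRises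
    (fun p hp => (mem_filter.1 hp).2.2) (Nat.lt_succ_of_le hj)
  rw [← filter_filter, hwords] at hequi
  simpa only [card_filter_cyclicDoubleRises] using hequi

end CyclicDoubleRises

lemma multichoose_sub_eq_choose {n k : ℕ} (hk : k ≤ n) :
    (k + 1).multichoose (n - k) = n.choose k := by
  rw [Nat.multichoose_eq, ← Nat.choose_symm hk]
  congr 1
  omega

end ChungFeller

open ChungFeller in
/-- Among paths in 𝒫(n,1,1) starting with an up step and ending with an up step
having exactly `n-k` double rises, for each `0 ≤ j ≤ n-k` the number with exactly `j`
double rises on or below the x-axis is `(1/(n-k+1))·C(n,k)·C(n-1,k-1)`. -/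
theorem narayana_chung_feller_double_rises (n k : ℕ) (hn : 1 ≤ n) (hk1 : 1 ≤ k) (hk2 : k ≤ n)
    (j : ℕ) (hj : j ≤ n - k) :
    Nat.card {p : Fin (2*n+1) → ℤ //
      (∀ i, p i = 1 ∨ p i = -1) ∧
      (univ.filter (fun i => p i = 1)).card = n + 1 ∧
      p ⟨0, Nat.succ_pos _⟩ = 1 ∧
      p (Fin.last (2*n)) = 1 ∧
      (univ.filter (fun i : Fin (2*n) => p i.castSucc = 1 ∧ p i.succ = 1)).card = n - k ∧
      (univ.filter (fun i : Fin (2*n) =>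
        p i.castSucc = 1 ∧ p i.succ = 1 ∧ psum p ((i : ℕ) + 1) ≤ 0)).card = j }
      * (n - k + 1) = Nat.choose n k * Nat.choose (n-1) (k-1) := by
  rw [Nat.subtype_card
    {p ∈ wordsEndingUp (2 * n) 1 (n + 1) (n - k) | #(lowDoubleRises p) = j} fun p => ?paths]
  case paths =>
    simp only [mem_filter, mem_wordsEndingUp, upSteps, doubleRises, lowDoubleRises, filter_filter,
      and_assoc, Fin.mk_zero']
    tauto
  have hcount := (card_wordsEndingUp (2 * n) (n - k) k (n - k)).1 (by omega)
  rw [Nat.sub_add_cancel hk2] at hcount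
  have hfactor : k.multichoose (n - k) = (n - 1).choose (k - 1) := by
    rw [← multichoose_sub_eq_choose (Nat.sub_le_sub_right hk2 1), Nat.sub_add_cancel hk1,
      Nat.sub_sub_sub_cancel_right hk1]
  rw [card_filter_wordsEndingUp_mul (by ring) hj, hcount, multichoose_sub_eq_choose hk2, hfactor]
end

section
/- Let n ≥ 1 and k ≥ 1. For each j with 1 ≤ j ≤ k, the number of paths p in 𝒫(n−1,1,2) with p_1 = +1 that have exactly k up steps in even positions, of which exactly j start on or below the x-axis, equals (1/k)·C(n−1,k−1)·C(n,k−1); in particular this count is independent of j and equals the Narayana number N(n,k). -/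
open Finset

/-!
Cut a path into `n` pairs of consecutive steps, so that even positions are the first steps of the
pairs, and rotate the path cyclically by whole pairs. Half the height gains `1` over a period, so
after rotating to start at pair `r`, the pair `i` starts at height at most `0` exactly when `i` does
not exceed `r` in the order that compares pairs by starting height and puts the later of two pairs
of equal height first. Rotating to the `r` that is `j`-th in this order among the `k` pairs opening
with an up step is therefore the only way to obtain a path counted by `j`. Hence for every `j` the
counted paths are `1 / n` of all `C(n, k) * C(n, k - 1)` paths with `k` up steps in even positions.
-/

lemma existsUnique_mem_card_filter_le_eq {ι α : Type*} [LinearOrder α] {s : Finset ι} {f : ι → α}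
    (hf : Set.InjOn f s) {j : ℕ} (hj : j ∈ Icc 1 #s) :
    ∃! r, r ∈ s ∧ #{i ∈ s | f i ≤ f r} = j := by
  have le_of_rank_eq {x y : ι} (hy : y ∈ s)
      (h : #{i ∈ s | f i ≤ f x} = #{i ∈ s | f i ≤ f y}) : f y ≤ f x := by
    by_contra! hxy
    have hsub : {i ∈ s | f i ≤ f x} ⊆ {i ∈ s | f i ≤ f y} :=
      monotone_filter_right s fun _ _ hi => hi.trans hxy.le
    have hmem : y ∈ {i ∈ s | f i ≤ f x} := by
      rw [eq_of_subset_of_card_le hsub h.ge]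
      exact mem_filter.2 ⟨hy, le_rfl⟩
    exact hxy.not_ge (mem_filter.1 hmem).2
  have rank_injOn : Set.InjOn (fun r => #{i ∈ s | f i ≤ f r}) s := fun x hx y hy h =>
    hf hx hy ((le_of_rank_eq hx h.symm).antisymm (le_of_rank_eq hy h))
  have rank_mapsTo : Set.MapsTo (fun r => #{i ∈ s | f i ≤ f r}) s (Icc 1 #s) := fun r hr =>
    mem_coe.2 <| mem_Icc.2
      ⟨card_pos.2 ⟨r, mem_filter.2 ⟨hr, le_rfl⟩⟩, card_le_card (filter_subset _ _)⟩
  obtain ⟨r, hr, rfl⟩ := surjOn_of_injOn_of_card_le _ rank_mapsTo rank_injOn (by simp) hj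
  exact ⟨r, ⟨hr, rfl⟩, fun x hx => rank_injOn hx.1 hr hx.2⟩

lemma card_mul_card_eq_of_existsUnique_neg_vadd_mem {G α : Type*} [AddGroup G] [Fintype G]
    [AddAction G α] {s t : Finset α} (hs : ∀ g : G, ∀ x ∈ s, g +ᵥ x ∈ t)
    (ht : ∀ y ∈ t, ∃! g : G, -g +ᵥ y ∈ s) : Fintype.card G * #s = #t := by
  rw [← card_univ, ← card_product]
  refine card_nbij (fun gx => gx.1 +ᵥ gx.2) (fun gx hgx => hs _ _ (mem_product.1 hgx).2) ?_ ?_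
  · rintro ⟨g, x⟩ hgx ⟨h, y⟩ hhy (heq : g +ᵥ x = h +ᵥ y)
    have hx : x ∈ s := (mem_product.1 hgx).2
    have hy : y ∈ s := (mem_product.1 hhy).2
    obtain rfl : g = h := (ht _ (hs g x hx)).unique (by rwa [neg_vadd_vadd])
      (by rwa [heq, neg_vadd_vadd])
    rw [vadd_left_cancel g heq]
  · intro y hy
    obtain ⟨g, hg, -⟩ := ht y hy
    exact ⟨(g, -g +ᵥ y), by simpa using hg, vadd_neg_vadd g y⟩

lemma psum_succ {N : ℕ} (p : Fin N → ℤ) {m : ℕ} (hm : m < N) :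
    psum p (m + 1) = psum p m + p ⟨m, hm⟩ := by
  have hinsert : ({j | (j : ℕ) < m + 1} : Finset (Fin N)) =
      insert ⟨m, hm⟩ ({j | (j : ℕ) < m} : Finset (Fin N)) := by
    ext i
    simp only [mem_filter_univ, mem_insert, Fin.ext_iff]
    omega
  rw [psum, hinsert, sum_insert (by simp), add_comm, psum]

/-- The splitting of the positions of a path of length `2 * n` by parity: `2 * i` corresponds to
`.inl i` and `2 * i + 1` to `.inr i`. -/
def evenOddEquiv (n : ℕ) : Fin n ⊕ Fin n ≃ Fin (2 * n) where
  toFun := Sum.elim (fun i => ⟨2 * i, by omega⟩) (fun i => ⟨2 * i + 1, by omega⟩)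
  invFun m := if (m : ℕ) % 2 = 0 then .inl ⟨m / 2, by omega⟩ else .inr ⟨m / 2, by omega⟩
  left_inv := by
    rintro (i | i)
    · simp
    · simp [Nat.mul_add_div]
  right_inv m := by
    rcases Nat.mod_two_eq_zero_or_one m with h | h <;> ext <;> simp [h] <;> omega

lemma evenOddEquiv_inl {n : ℕ} (i : Fin n) : evenOddEquiv n (.inl i) = ⟨2 * i, by omega⟩ := rfl

lemma evenOddEquiv_inr {n : ℕ} (i : Fin n) : evenOddEquiv n (.inr i) = ⟨2 * i + 1, by omega⟩ := rfl

lemma card_filter_evenOdd {n : ℕ} (q : Fin (2 * n) → Prop) [DecidablePred q] :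
    #{m | q m} = #{i | q (evenOddEquiv n (.inl i))} + #{i | q (evenOddEquiv n (.inr i))} := by
  simp only [card_filter, ← (evenOddEquiv n).sum_comp, Fintype.sum_sum_type]

section CyclicSum

variable {n : ℕ} [NeZero n]

/-- The sum of the first `m` entries of the `n`-periodic extension of `w`; it is used to follow the
height of a path through its cyclic rotations. -/
def cyclicSum (w : Fin n → ℤ) (m : ℕ) : ℤ :=
  ∑ t ∈ range m, w (Fin.ofNat n t)

lemma cyclicSum_add (w : Fin n → ℤ) (r : Fin n) (m : ℕ) :
    cyclicSum w (r + m) = cyclicSum w r + cyclicSum (fun i => w (r + i)) m := by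
  have ofNat_val_add (t : ℕ) : Fin.ofNat n (r + t) = r + Fin.ofNat n t := by
    ext
    simp [Fin.val_add]
  simp only [cyclicSum, sum_range_add, ofNat_val_add]

lemma cyclicSum_self (w : Fin n → ℤ) : cyclicSum w n = ∑ i, w i := by
  simp [cyclicSum, sum_range]

lemma cyclicSum_period_add (w : Fin n → ℤ) (m : ℕ) :
    cyclicSum w (n + m) = ∑ i, w i + cyclicSum w m := by
  rw [← cyclicSum_self]
  simp [cyclicSum, sum_range_add, Fin.ofNat]

/-- The sort key of the cyclic sums: by value, ties broken in favour of the later index. -/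
def cyclicKey (w : Fin n → ℤ) (i : Fin n) : ℤ ×ₗ (Fin n)ᵒᵈ :=
  toLex (cyclicSum w i, OrderDual.toDual i)

lemma cyclicKey_injective (w : Fin n → ℤ) : Function.Injective (cyclicKey w) := fun _ _ h =>
  OrderDual.toDual.injective (Prod.ext_iff.1 (toLex.injective h)).2

lemma cyclicSum_rotate_nonpos_iff {w : Fin n → ℤ} (hw : ∑ i, w i = 1) (r i : Fin n) :
    cyclicSum (fun t => w (r + t)) (i - r : Fin n) ≤ 0 ↔ cyclicKey w i ≤ cyclicKey w r := by
  have hadd := cyclicSum_add w r (i - r : Fin n)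
  rw [cyclicKey, cyclicKey, Prod.Lex.toLex_le_toLex, OrderDual.toDual_le_toDual]
  rcases le_or_gt r i with hri | hir
  · have hval : (r : ℕ) + (i - r : Fin n) = i := by
      rw [Fin.sub_val_of_le hri]
      omega
    rw [hval] at hadd
    simp only [hri, and_true]
    omega
  · have hval : (r : ℕ) + (i - r : Fin n) = n + i := by
      rw [Fin.coe_sub_iff_lt.2 hir]
      omega
    rw [hval, cyclicSum_period_add, hw] at hadd
    simp only [hir.not_ge, and_false, or_false]
    omega

end CyclicSum

/-- A path with `2 * n` steps, encoded by its up steps: `i ∈ P.1` if the step in the even position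
`2 * i` goes up, and `i ∈ P.2` if the step in the odd position `2 * i + 1` goes up. -/
abbrev UpSteps (n : ℕ) : Type := Finset (Fin n) × Finset (Fin n)

namespace UpSteps

variable {n : ℕ}

/-- Half the height gained by a path over the steps in positions `2 * i` and `2 * i + 1`. -/
def halfRise (P : UpSteps n) (i : Fin n) : ℤ :=
  (if i ∈ P.1 then 1 else 0) + (if i ∈ P.2 then 1 else 0) - 1

lemma sum_halfRise (P : UpSteps n) : ∑ i, P.halfRise i = #P.1 + #P.2 - n := by
  simp [halfRise, sum_add_distrib]

section Rotation

open scoped Pointwise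

variable [NeZero n]

/-- The even positions whose step goes up and starts on or below the axis, as pair indices. -/
def lowUpSteps (P : UpSteps n) : Finset (Fin n) :=
  {i ∈ P.1 | cyclicSum P.halfRise i ≤ 0}

lemma mem_neg_vadd_fst (P : UpSteps n) (r i : Fin n) : i ∈ (-r +ᵥ P).1 ↔ r + i ∈ P.1 :=
  mem_neg_vadd_finset_iff

lemma halfRise_neg_vadd (P : UpSteps n) (r : Fin n) :
    halfRise (-r +ᵥ P) = fun i => P.halfRise (r + i) := by
  ext i
  simp [halfRise, mem_neg_vadd_finset_iff]

lemma lowUpSteps_neg_vadd {P : UpSteps n} (hP : #P.1 + #P.2 = n + 1) (r : Fin n) :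
    lowUpSteps (-r +ᵥ P) =
      -r +ᵥ {i ∈ P.1 | cyclicKey P.halfRise i ≤ cyclicKey P.halfRise r} := by
  have hsum : ∑ i, P.halfRise i = 1 := by
    rw [sum_halfRise]
    omega
  ext i
  rw [lowUpSteps, mem_filter, mem_neg_vadd_fst, mem_neg_vadd_finset_iff, mem_filter, vadd_eq_add,
    ← cyclicSum_rotate_nonpos_iff hsum, add_sub_cancel_left, halfRise_neg_vadd]

lemma existsUnique_neg_vadd_card_lowUpSteps_eq {P : UpSteps n} (hP : #P.1 + #P.2 = n + 1) {j : ℕ}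
    (hj : j ∈ Icc 1 #P.1) :
    ∃! r : Fin n, 0 ∈ (-r +ᵥ P).1 ∧ #(lowUpSteps (-r +ᵥ P)) = j := by
  simp only [mem_neg_vadd_fst, add_zero, lowUpSteps_neg_vadd hP, card_vadd_finset]
  exact existsUnique_mem_card_filter_le_eq (cyclicKey_injective _).injOn hj

end Rotation

section Counting

variable (n)

/-- The paths from height `0` to height `2` with `k` up steps in even positions. -/
def withEvenUpSteps (k : ℕ) : Finset (UpSteps n) :=
  {P | #P.1 + #P.2 = n + 1 ∧ #P.1 = k}

/-- The paths in `withEvenUpSteps n k` that start with an up step and have exactly `j` up steps in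
even positions starting on or below the axis. -/
def withLowUpSteps [NeZero n] (k j : ℕ) : Finset (UpSteps n) :=
  {P ∈ withEvenUpSteps n k | 0 ∈ P.1 ∧ #P.lowUpSteps = j}

lemma card_withEvenUpSteps_succ (k : ℕ) :
    #(withEvenUpSteps n (k + 1)) = n.choose (k + 1) * n.choose k := by
  rcases lt_or_ge n (k + 1) with hnk | hkn
  · rw [Nat.choose_eq_zero_of_lt hnk, zero_mul, card_eq_zero, withEvenUpSteps, filter_eq_empty_iff]
    rintro P - ⟨-, hP⟩
    have hle : #P.1 ≤ n := card_finset_fin_le P.1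
    omega
  · have hprod : withEvenUpSteps n (k + 1) =
        powersetCard (k + 1) univ ×ˢ powersetCard (n - k) univ := by
      ext P
      simp only [withEvenUpSteps, mem_filter_univ, mem_product, mem_powersetCard_univ]
      omega
    rw [hprod, card_product, card_powersetCard, card_powersetCard, card_univ, Fintype.card_fin,
      Nat.choose_symm (by omega)]

variable [NeZero n]

open scoped Pointwise in
lemma mul_card_withLowUpSteps {k j : ℕ} (hj : j ∈ Icc 1 k) :
    n * #(withLowUpSteps n k j) = #(withEvenUpSteps n k) := by
  have vadd_mem (r : Fin n) (P : UpSteps n) :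
      r +ᵥ P ∈ withEvenUpSteps n k ↔ P ∈ withEvenUpSteps n k := by
    simp [withEvenUpSteps]
  have hcard : Fintype.card (Fin n) * #(withLowUpSteps n k j) = #(withEvenUpSteps n k) := by
    refine card_mul_card_eq_of_existsUnique_neg_vadd_mem
      (fun r P hP => (vadd_mem r P).2 (mem_filter.1 hP).1) fun P hP => ?_
    obtain ⟨htotal, rfl⟩ := (mem_filter_univ P).1 hP
    simpa only [withLowUpSteps, mem_filter, vadd_mem, hP, true_and] using
      existsUnique_neg_vadd_card_lowUpSteps_eq htotal hj
  rwa [Fintype.card_fin] at hcard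

theorem card_withLowUpSteps_mul {k j : ℕ} (hj : j ∈ Icc 1 k) :
    #(withLowUpSteps n k j) * k = (n - 1).choose (k - 1) * n.choose (k - 1) := by
  obtain ⟨m, rfl⟩ := Nat.exists_eq_succ_of_ne_zero (NeZero.ne n)
  obtain ⟨l, rfl⟩ : ∃ l, k = l + 1 := ⟨k - 1, by have := mem_Icc.1 hj; omega⟩
  apply Nat.eq_of_mul_eq_mul_left m.succ_pos
  calc (m + 1) * (#(withLowUpSteps (m + 1) (l + 1) j) * (l + 1))
      = #(withEvenUpSteps (m + 1) (l + 1)) * (l + 1) := by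
        rw [← mul_card_withLowUpSteps _ hj, mul_assoc]
    _ = (m + 1).choose (l + 1) * (l + 1) * (m + 1).choose l := by
        rw [card_withEvenUpSteps_succ, mul_right_comm]
    _ = (m + 1) * (m.choose l * (m + 1).choose l) := by
        rw [← Nat.add_one_mul_choose_eq, mul_assoc]

end Counting

/-- The `±1` step sequence of the path encoded by `P`. -/
def toPath (P : UpSteps n) (m : Fin (2 * n)) : ℤ :=
  if (evenOddEquiv n).symm m ∈ P.1.disjSum P.2 then 1 else -1

lemma toPath_inl (P : UpSteps n) (i : Fin n) :
    P.toPath (evenOddEquiv n (.inl i)) = if i ∈ P.1 then 1 else -1 := by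
  simp [toPath]

lemma toPath_inr (P : UpSteps n) (i : Fin n) :
    P.toPath (evenOddEquiv n (.inr i)) = if i ∈ P.2 then 1 else -1 := by
  simp [toPath]

lemma toPath_inl_eq_one_iff (P : UpSteps n) (i : Fin n) :
    P.toPath (evenOddEquiv n (.inl i)) = 1 ↔ i ∈ P.1 := by
  simp [toPath_inl]

lemma toPath_inr_eq_one_iff (P : UpSteps n) (i : Fin n) :
    P.toPath (evenOddEquiv n (.inr i)) = 1 ↔ i ∈ P.2 := by
  simp [toPath_inr]

/-- The encoding of `±1` sequences by their up steps, used to count sequences as pairs of sets. -/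
def equivPath (n : ℕ) : UpSteps n ≃ {p : Fin (2 * n) → ℤ // ∀ m, p m = 1 ∨ p m = -1} where
  toFun P := ⟨P.toPath, fun m => ite_eq_or_eq _ _ _⟩
  invFun p :=
    (univ.filter fun i => p.1 (evenOddEquiv n (.inl i)) = 1,
      univ.filter fun i => p.1 (evenOddEquiv n (.inr i)) = 1)
  left_inv P := by
    ext i
    · simp only [mem_filter_univ, toPath_inl_eq_one_iff]
    · simp only [mem_filter_univ, toPath_inr_eq_one_iff]
  right_inv p := by
    ext m
    obtain ⟨i | i, rfl⟩ := (evenOddEquiv n).surjective m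
    · rcases p.2 (evenOddEquiv n (.inl i)) with h | h <;> simp [toPath_inl, h]
    · rcases p.2 (evenOddEquiv n (.inr i)) with h | h <;> simp [toPath_inr, h]

lemma card_paths_eq (q : (Fin (2 * n) → ℤ) → Prop) :
    Nat.card {p : Fin (2 * n) → ℤ // (∀ m, p m = 1 ∨ p m = -1) ∧ q p} =
      Nat.card {P : UpSteps n // q P.toPath} :=
  Nat.card_congr <| (Equiv.subtypeSubtypeEquivSubtypeInter _ q).symm.trans
    ((equivPath n).subtypeEquiv fun _ => Iff.rfl).symm

lemma card_toPath_eq_one (P : UpSteps n) : #{m | P.toPath m = 1} = #P.1 + #P.2 := by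
  simp [card_filter_evenOdd, toPath_inl_eq_one_iff, toPath_inr_eq_one_iff]

lemma card_even_filter (q : Fin (2 * n) → Prop) [DecidablePred q] (P : UpSteps n) :
    #{m | P.toPath m = 1 ∧ (m : ℕ) % 2 = 0 ∧ q m} = #{i ∈ P.1 | q (evenOddEquiv n (.inl i))} := by
  have even_inl (i : Fin n) : (evenOddEquiv n (.inl i) : ℕ) % 2 = 0 := by
    simp [evenOddEquiv_inl]
  have odd_inr (i : Fin n) : (evenOddEquiv n (.inr i) : ℕ) % 2 ≠ 0 := by
    simp [evenOddEquiv_inr]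
  simp only [card_filter_evenOdd, toPath_inl_eq_one_iff, even_inl, odd_inr, true_and, false_and,
    and_false, filter_false, card_empty, add_zero]
  rw [← filter_filter, filter_univ_mem]

lemma card_even_toPath_eq_one (P : UpSteps n) :
    #{m | P.toPath m = 1 ∧ (m : ℕ) % 2 = 0} = #P.1 := by
  simpa using card_even_filter (fun _ => True) P

section Height

variable [NeZero n]

lemma psum_toPath_two_mul (P : UpSteps n) {m : ℕ} (hm : m ≤ n) :
    psum P.toPath (2 * m) = 2 * cyclicSum P.halfRise m := by
  induction m with
  | zero => simp [psum, cyclicSum]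
  | succ m ih =>
    have hmod : Fin.ofNat n m = ⟨m, hm⟩ := Fin.ext (Nat.mod_eq_of_lt hm)
    have heven := P.toPath_inl ⟨m, hm⟩
    have hodd := P.toPath_inr ⟨m, hm⟩
    rw [evenOddEquiv_inl] at heven
    rw [evenOddEquiv_inr] at hodd
    rw [mul_add_one, psum_succ _ (by omega), psum_succ _ (by omega), ih (by omega), heven, hodd,
      cyclicSum, cyclicSum, sum_range_succ, hmod, halfRise]
    split_ifs <;> ring

lemma card_low_toPath_eq_one (P : UpSteps n) :
    #{m | P.toPath m = 1 ∧ (m : ℕ) % 2 = 0 ∧ psum P.toPath m ≤ 0} = #P.lowUpSteps := by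
  have height_nonpos_iff (i : Fin n) :
      psum P.toPath (evenOddEquiv n (.inl i)) ≤ 0 ↔ cyclicSum P.halfRise i ≤ 0 := by
    rw [evenOddEquiv_inl, psum_toPath_two_mul P i.isLt.le]
    omega
  simp only [card_even_filter, height_nonpos_iff, lowUpSteps]

lemma toPath_zero_eq_one_iff (P : UpSteps n) (h : 0 < 2 * n) :
    P.toPath ⟨0, h⟩ = 1 ↔ 0 ∈ P.1 :=
  P.toPath_inl_eq_one_iff 0

end Height

end UpSteps

/-- Among paths in 𝒫(n−1,1,2) (length 2n, n+1 up steps, n−1 down steps) starting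
with an up step and having exactly `k` up steps in even positions, for each
`1 ≤ j ≤ k` the number with exactly `j` even-position up steps starting on or
below the x-axis is `(1/k)·C(n-1,k-1)·C(n,k-1)`, the Narayana number `N(n,k)`. -/
theorem narayana_even_up_steps (n k : ℕ) (hn : 1 ≤ n) (hk : 1 ≤ k)
    (j : ℕ) (hj1 : 1 ≤ j) (hj2 : j ≤ k) :
    Nat.card {p : Fin (2*n) → ℤ //
      (∀ m, p m = 1 ∨ p m = -1) ∧
      (univ.filter (fun m => p m = 1)).card = n + 1 ∧
      p ⟨0, by omega⟩ = 1 ∧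
      (univ.filter (fun m : Fin (2*n) => p m = 1 ∧ (m : ℕ) % 2 = 0)).card = k ∧
      (univ.filter (fun m : Fin (2*n) =>
        p m = 1 ∧ (m : ℕ) % 2 = 0 ∧ psum p (m : ℕ) ≤ 0)).card = j }
      * k = Nat.choose (n-1) (k-1) * Nat.choose n (k-1) := by
  have : NeZero n := ⟨by omega⟩
  rw [UpSteps.card_paths_eq]
  simp only [UpSteps.card_toPath_eq_one, UpSteps.toPath_zero_eq_one_iff,
    UpSteps.card_even_toPath_eq_one, UpSteps.card_low_toPath_eq_one]
  rw [← UpSteps.card_withLowUpSteps_mul n (mem_Icc.2 ⟨hj1, hj2⟩), ← Nat.subtype_card]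
  intro P
  simp only [UpSteps.withLowUpSteps, UpSteps.withEvenUpSteps, mem_filter, mem_univ, true_and]
  tauto
end
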